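/- With B and the layered directed graph C constructed as follows — n ≥ 2, L ≥ 1, bits K_{i,j}^{(ℓ)} ∈ {0,1} for 1 ≤ i ≤ j ≤ n−1 and ℓ ∈ {1,…,L}; B_{i,j+1} = ⊕_{ℓ} K_{i,j}^{(ℓ)} and all other entries of B zero; C has layers N_1, J_1, …, J_{n−1}, N_n with N_i having vertices {1,…,n}, J_i having vertices {1,…,n} ∪ {(i,j,ℓ)}, and edges: q∈N_i → q∈J_i always, i∈N_i → (i,j,ℓ)∈J_i iff K_{i,j}^{(ℓ)} = 1, q∈J_i → q∈N_{i+1} always, (i,j,ℓ)∈J_i → (j+1)∈N_{i+1} always — the following holds for every i ∈ {1, …, n}: the number of directed paths in C from vertex i in layer N_i to vertex n in layer N_n is congruent modulo 2 to the number of directed paths from vertex i to vertex n in the monotone DAG B. -/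

import Mathlib

/-!
Strengthened inductive claim inside Proposition 4.12 of the paper.  All indices are
0-based: vertex `p : Fin n` corresponds to the paper's vertex `p+1`, the bit `K i j ℓ`
(for `0 ≤ i ≤ j ≤ n-2`, `ℓ < L`) corresponds to the paper's `K_{i+1,j+1}^{(ℓ+1)}`, and
the paper's entry `B_{i,j+1} = ⊕_ℓ K_{i,j}^{(ℓ)}` becomes `B p q = (∑_ℓ K p (q-1) ℓ) % 2`
for `p < q`.

The layered graph `C` has `2n-1` layers `N_1, J_1, N_2, …, J_{n-1}, N_n`, indexed by
`t : Fin (2n-1)` (even `t = 2i` is layer `N_{i+1}`, odd `t = 2i+1` is layer `J_{i+1}`).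
Layer-`t` vertices are encoded as `(t, Sum.inl q)` for the vertices `{1, …, n}` and
`(t, Sum.inr (j, ℓ))` for the junction vertices `(i, j, ℓ)` of a `J`-layer (junction
vertices of a `J_i` layer all have first coordinate `i`, so only `(j, ℓ)` is recorded;
unused sum components are isolated, hence do not affect path counts).  Edges (a)–(d)
go only from each layer to the next, so the number of directed paths between two
vertices is `∑_{k≥1} (M^k)` of the adjacency matrix `M`; all such paths have length at
most `2n-2`.
-/

/-- The monotone-DAG adjacency matrix `B` determined by the bits `K`. -/
def monB (n L : ℕ) (K : ℕ → ℕ → ℕ → Bool) : Matrix (Fin n) (Fin n) ℕ :=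
  Matrix.of fun p q : Fin n =>
    if p < q then
      (∑ ℓ ∈ Finset.range L, if K (p : ℕ) ((q : ℕ) - 1) ℓ then 1 else 0) % 2
    else 0

/-- Adjacency matrix of the layered graph `C`: edges (a) `q ∈ N_i → q ∈ J_i` always,
(b) `i ∈ N_i → (i,j,ℓ) ∈ J_i` iff `K i j ℓ = 1` (with `i ≤ j ≤ n-2`, 0-indexed),
(c) `q ∈ J_i → q ∈ N_{i+1}` always, (d) `(i,j,ℓ) ∈ J_i → j+1 ∈ N_{i+1}` always. -/
def layerAdj (n L : ℕ) (K : ℕ → ℕ → ℕ → Bool) :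
    Matrix (Fin (2 * n - 1) × (Fin n ⊕ Fin n × Fin L))
      (Fin (2 * n - 1) × (Fin n ⊕ Fin n × Fin L)) ℕ :=
  Matrix.of fun p q =>
    if (q.1 : ℕ) = (p.1 : ℕ) + 1 then
      if (p.1 : ℕ) % 2 = 0 then
        -- `N`-layer (layer index `(p.1 : ℕ)/2`) to `J`-layer
        match p.2, q.2 with
        | Sum.inl a, Sum.inl b => if a = b then 1 else 0
        | Sum.inl a, Sum.inr (j, ℓ) =>
            if (a : ℕ) = (p.1 : ℕ) / 2 ∧ (a : ℕ) ≤ (j : ℕ) ∧ (j : ℕ) ≤ n - 2 ∧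
                K (a : ℕ) (j : ℕ) (ℓ : ℕ) then 1 else 0
        | _, _ => 0
      else
        -- `J`-layer to `N`-layer
        match p.2, q.2 with
        | Sum.inl a, Sum.inl b => if a = b then 1 else 0
        | Sum.inr (j, _), Sum.inl b => if (b : ℕ) = (j : ℕ) + 1 then 1 else 0
        | _, _ => 0
    else 0

/-!
Between `N_t` and `N_{t+1}` the graph `C` either keeps the current vertex or, if that vertex is `t`,
replaces it by a vertex `q` in one of `S t q` ways, where `S` is the XOR defining `B` with the sum
left unreduced.  In block form the two edge layers are `[1 P; 0 0]` and `[1 0; Q 0]`, with product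
`[1 + P Q 0; 0 0]`, and `P Q` is row `t` of `S`.  Paths in the multigraph `S` visit vertices in
increasing order, so multiplying these factors over all layers reproduces row by row the number of
paths in `S`, exactly and not only modulo 2; finally `S ≡ B` modulo 2.
-/

open Finset Matrix

section WalkCount

variable {ι R : Type*} [Fintype ι] [DecidableEq ι] [Semiring R]

/-- The matrix counting the directed walks of length less than `N`, the trivial ones included, in
the multigraph with adjacency matrix `M`.  When `M ^ N = 0` these are all the walks. -/
def walkCount (M : Matrix ι ι R) (N : ℕ) : Matrix ι ι R :=
  ∑ k ∈ range N, M ^ k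

theorem walkCount_eq_mul_add_one {M : Matrix ι ι R} {N : ℕ} (hM : M ^ N = 0) :
    walkCount M N = M * walkCount M N + 1 := by
  have h := geom_sum_succ' (x := M) (n := N)
  rw [hM, zero_add, geom_sum_succ] at h
  exact h.symm

theorem walkCount_apply (M : Matrix ι ι R) {m N : ℕ} (hN : N = m + 1) (p q : ι) :
    walkCount M N p q = ∑ k ∈ Icc 1 m, (M ^ k) p q + (1 : Matrix ι ι R) p q := by
  subst hN
  rw [walkCount, Matrix.sum_apply, range_eq_Ico, sum_eq_sum_Ico_succ_bot m.succ_pos, pow_zero,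
    add_comm]
  rfl

theorem walkCount_modEq {A B : Matrix ι ι ℕ} {m : ℕ} (h : ∀ p q, A p q ≡ B p q [MOD m]) (N : ℕ)
    (p q : ι) : walkCount A N p q ≡ walkCount B N p q [MOD m] := by
  let φ := (Nat.castRingHom (ZMod m)).mapMatrix (m := ι)
  have hAB : φ A = φ B := by
    ext p q
    exact (ZMod.natCast_eq_natCast_iff _ _ _).2 (h p q)
  have hwalk : φ (walkCount A N) = φ (walkCount B N) := by
    simp only [walkCount, map_sum, map_pow, hAB]
  exact (ZMod.natCast_eq_natCast_iff _ _ _).1 (congr_fun₂ hwalk p q)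

theorem pow_apply_eq_zero_of_lt_add {M : Matrix ι ι R} {f : ι → ℕ}
    (hM : ∀ p q, M p q ≠ 0 → f p < f q) {k : ℕ} {p q : ι} (h : f q < f p + k) :
    (M ^ k) p q = 0 := by
  induction k generalizing p with
  | zero => exact one_apply_ne fun hpq => by simp [hpq] at h
  | succ k ih =>
    rw [pow_succ', Matrix.mul_apply]
    refine sum_eq_zero fun r _ => ?_
    by_cases hr : M p r = 0
    · rw [hr, zero_mul]
    · have := hM p r hr
      rw [ih (by omega), mul_zero]

theorem pow_eq_zero_of_strictly_graded {M : Matrix ι ι R} {N : ℕ} {f : ι → Fin N}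
    (hM : ∀ p q, M p q ≠ 0 → f p < f q) : M ^ N = 0 := by
  ext p q
  exact pow_apply_eq_zero_of_lt_add (f := fun r => (f r : ℕ)) hM (by omega)

end WalkCount

section BackSubstitution

variable {ι R : Type*} [Fintype ι] [LinearOrder ι] [Semiring R]

theorem row_eq_of_covBy_recurrence {S G : Matrix ι ι R} {U : ι → Matrix ι ι R}
    (hS : ∀ p q, S p q ≠ 0 → p < q) (hG : G = S * G + 1)
    (hmax : ∀ t, IsMax t → U t = 1)
    (hcov : ∀ t t', t ⋖ t' → U t = (1 + single t t 1 * S) * U t') (t q : ι) :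
    U t q = if q < t then (1 : Matrix ι ι R) q else G q := by
  have hGrow (p j : ι) : G p j = ∑ r, S p r * G r j + (1 : Matrix ι ι R) p j :=
    congr_fun₂ hG p j
  induction t using WellFoundedGT.induction generalizing q with
  | _ t ih =>
  ext j
  by_cases ht : IsMax t
  · rw [hmax t ht]
    split_ifs with hq
    · rfl
    · have hSq (r : ι) : S q r = 0 :=
        not_not.1 fun h => (ht.mono (not_lt.1 hq)).not_lt (hS q r h)
      simp only [hGrow q j, hSq, zero_mul, sum_const_zero, zero_add]
  · obtain ⟨t', htt'⟩ := exists_covBy_of_wellFoundedLT ht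
    have hlt (r : ι) : r < t' ↔ r ≤ t := htt'.lt_iff_le_left
    rw [hcov t t' htt', add_mul, one_mul, Matrix.add_apply, Matrix.mul_assoc]
    obtain rfl | hqt := eq_or_ne q t
    · have hsum : (S * U t') q j = (S * G) q j := by
        rw [Matrix.mul_apply, Matrix.mul_apply]
        refine sum_congr rfl fun r _ => ?_
        by_cases hr : S q r = 0
        · simp only [hr, zero_mul]
        · rw [ih t' htt'.lt, if_neg ((hlt r).not.2 (hS q r hr).not_ge)]
      rw [single_mul_apply_same, one_mul, hsum, ih t' htt'.lt, if_pos htt'.lt,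
        if_neg (lt_irrefl q), add_comm, hGrow q j, Matrix.mul_apply]
    · rw [single_mul_apply_of_ne _ _ _ _ _ hqt, add_zero, ih t' htt'.lt]
      simp only [hlt, le_iff_lt_or_eq, hqt, or_false]

end BackSubstitution

section Layered

variable {κ α R : Type*}

/-- A multigraph on `κ × α`, whose first coordinate is the layer of a vertex, is layered if every
edge leads to the next layer. -/
def IsLayered [LinearOrder κ] [Zero R] (M : Matrix (κ × α) (κ × α) R) : Prop :=
  ∀ p q, M p q ≠ 0 → p.1 ⋖ q.1

/-- The block of `M` with rows in layer `s` and columns in layer `s'`. -/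
def layerBlock (M : Matrix (κ × α) (κ × α) R) (s s' : κ) : Matrix α α R :=
  M.submatrix (Prod.mk s) (Prod.mk s')

namespace IsLayered

variable [LinearOrder κ] [Fintype κ] [Fintype α] [Semiring R] {M : Matrix (κ × α) (κ × α) R}

theorem layerBlock_mul (hM : IsLayered M) (X : Matrix (κ × α) (κ × α) R) {s s' : κ}
    (hs : s ⋖ s') (u : κ) :
    layerBlock (M * X) s u = layerBlock M s s' * layerBlock X s' u := by
  ext x z
  simp only [layerBlock, submatrix_apply, Matrix.mul_apply, Fintype.sum_prod_type]
  refine sum_eq_single_of_mem s' (mem_univ _) fun r _ hr => sum_eq_zero fun y _ => ?_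
  have hzero : M (s, x) (r, y) = 0 := not_not.1 fun h => hr ((hM _ _ h).unique_right hs)
  rw [hzero, zero_mul]

theorem layerBlock_mul_of_isMax (hM : IsLayered M) (X : Matrix (κ × α) (κ × α) R) {s : κ}
    (hs : IsMax s) (u : κ) : layerBlock (M * X) s u = 0 := by
  ext x z
  rw [layerBlock, submatrix_apply, Matrix.mul_apply]
  refine sum_eq_zero fun r _ => ?_
  have hzero : M (s, x) r = 0 := not_not.1 fun h => hs.not_lt (hM _ _ h).lt
  rw [hzero, zero_mul]

variable [DecidableEq α] {N : ℕ}

theorem layerBlock_walkCount (hM : IsLayered M) (hN : M ^ N = 0) {s s' u : κ} (hs : s ⋖ s')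
    (hsu : s ≠ u) :
    layerBlock (walkCount M N) s u = layerBlock M s s' * layerBlock (walkCount M N) s' u := by
  have hone : layerBlock (1 : Matrix (κ × α) (κ × α) R) s u = 0 := by
    ext x y
    exact one_apply_ne fun h => hsu (congr_arg Prod.fst h)
  calc layerBlock (walkCount M N) s u
      = layerBlock (M * walkCount M N) s u + layerBlock 1 s u :=
        congr_arg (layerBlock · s u) (walkCount_eq_mul_add_one hN)
    _ = layerBlock M s s' * layerBlock (walkCount M N) s' u := by
        rw [hM.layerBlock_mul _ hs, hone, add_zero]

theorem layerBlock_walkCount_of_isMax (hM : IsLayered M) (hN : M ^ N = 0) {s : κ} (hs : IsMax s) :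
    layerBlock (walkCount M N) s s = 1 := by
  have hone : layerBlock (1 : Matrix (κ × α) (κ × α) R) s s = 1 :=
    submatrix_one _ (Prod.mk_right_injective s)
  calc layerBlock (walkCount M N) s s
      = layerBlock (M * walkCount M N) s s + layerBlock 1 s s :=
        congr_arg (layerBlock · s s) (walkCount_eq_mul_add_one hN)
    _ = 1 := by rw [hM.layerBlock_mul_of_isMax _ hs, hone, zero_add]

end IsLayered

end Layered

section LayerAdj

variable {n L : ℕ} {K : ℕ → ℕ → ℕ → Bool}

/-- The adjacency matrix of `B` before reduction modulo 2: entry `(p, q)` is the number of `ℓ` with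
`K p (q - 1) ℓ = 1`. -/
def bitCount (n L : ℕ) (K : ℕ → ℕ → ℕ → Bool) : Matrix (Fin n) (Fin n) ℕ :=
  Matrix.of fun p q =>
    if p < q then ∑ ℓ ∈ range L, if K p (q - 1) ℓ then 1 else 0 else 0

/-- The position of the paper's layer `N_{t+1}` among the layers of `C`. -/
def nLayer (t : Fin n) : Fin (2 * n - 1) :=
  ⟨2 * t, by omega⟩

/-- The edges (b) from the vertices of the `t`-th `N`-layer to the junctions of the next
`J`-layer. -/
def junctionIn (n L : ℕ) (K : ℕ → ℕ → ℕ → Bool) (t : Fin n) : Matrix (Fin n) (Fin n × Fin L) ℕ :=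
  Matrix.of fun a z => if a = t ∧ a ≤ z.1 ∧ (z.1 : ℕ) ≤ n - 2 ∧ K a z.1 z.2 then 1 else 0

/-- The edges (d) from the junctions of a `J`-layer to the vertices of the next `N`-layer. -/
def junctionOut (n L : ℕ) : Matrix (Fin n × Fin L) (Fin n) ℕ :=
  Matrix.of fun z b => if (b : ℕ) = z.1 + 1 then 1 else 0

theorem lt_of_bitCount_ne_zero {p q : Fin n} (h : bitCount n L K p q ≠ 0) : p < q :=
  not_not.1 fun hpq => h (if_neg hpq)

theorem bitCount_modEq_monB (p q : Fin n) : bitCount n L K p q ≡ monB n L K p q [MOD 2] := by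
  by_cases hpq : p < q
  · simp only [bitCount, monB, of_apply, if_pos hpq]
    exact (Nat.mod_modEq _ _).symm
  · simp only [bitCount, monB, of_apply, if_neg hpq]
    rfl

theorem junctionIn_mul_junctionOut (t : Fin n) :
    junctionIn n L K t * junctionOut n L = single t t 1 * bitCount n L K := by
  ext q b
  obtain rfl | hqt := eq_or_ne q t
  · rw [single_mul_apply_same, one_mul, Matrix.mul_apply, Fintype.sum_prod_type]
    by_cases hqb : q < b
    · have hj : (b : ℕ) = b - 1 + 1 := by omega
      rw [sum_eq_single_of_mem (⟨b - 1, by omega⟩ : Fin n) (mem_univ _)]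
      · have hqj : (q : ℕ) ≤ b - 1 ∧ (b : ℕ) - 1 ≤ n - 2 := by omega
        simp only [junctionIn, junctionOut, bitCount, of_apply, Fin.le_def, hqj, ← hj, hqb,
          if_true, true_and, mul_one, sum_range]
      · intro j _ hjb
        have hb : (b : ℕ) ≠ j + 1 := fun h => hjb (Fin.ext (by simp [h]))
        simp only [junctionOut, of_apply, hb, if_false, mul_zero, sum_const_zero]
    · rw [bitCount, of_apply, if_neg hqb]
      refine sum_eq_zero fun j _ => sum_eq_zero fun ℓ _ => ?_
      have hjb : ¬(q ≤ j ∧ (b : ℕ) = j + 1) := fun h => hqb (Fin.lt_def.2 (by omega))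
      simp only [junctionIn, junctionOut, of_apply]
      grind
  · rw [single_mul_apply_of_ne _ _ _ _ _ hqt, Matrix.mul_apply]
    simp only [junctionIn, of_apply, hqt, false_and, if_false, zero_mul, sum_const_zero]

theorem isLayered_layerAdj : IsLayered (layerAdj n L K) := fun p q h => by
  rw [Fin.covBy_iff, Nat.covBy_iff_add_one_eq]
  by_contra hpq
  exact h (if_neg (Ne.symm hpq))

theorem layerAdj_pow_eq_zero : layerAdj n L K ^ (2 * n - 1) = 0 :=
  pow_eq_zero_of_strictly_graded fun p q h => (isLayered_layerAdj p q h).lt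

theorem bitCount_pow_eq_zero : bitCount n L K ^ n = 0 :=
  pow_eq_zero_of_strictly_graded (f := id) fun _ _ => lt_of_bitCount_ne_zero

theorem layerBlock_layerAdj_nLayer {t : Fin n} {s : Fin (2 * n - 1)} (hs : nLayer t ⋖ s) :
    layerBlock (layerAdj n L K) (nLayer t) s = fromBlocks 1 (junctionIn n L K t) 0 0 := by
  rw [Fin.covBy_iff, Nat.covBy_iff_add_one_eq] at hs
  have hpar : 2 * (t : ℕ) % 2 = 0 ∧ 2 * (t : ℕ) / 2 = t := by omega
  ext (a | z) (b | z')
  · simp [layerBlock, layerAdj, ← hs, one_apply]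
  · simp [layerBlock, layerAdj, ← hs, nLayer, junctionIn, hpar, Fin.ext_iff]
  · simp [layerBlock, layerAdj, ← hs, nLayer]
  · simp [layerBlock, layerAdj, ← hs, nLayer]

theorem layerBlock_layerAdj_of_covBy_nLayer {t : Fin n} {s : Fin (2 * n - 1)}
    (hs : s ⋖ nLayer t) :
    layerBlock (layerAdj n L K) s (nLayer t) = fromBlocks 1 0 (junctionOut n L) 0 := by
  rw [Fin.covBy_iff, Nat.covBy_iff_add_one_eq] at hs
  have hpar : (s : ℕ) % 2 = 1 := by
    have : (s : ℕ) + 1 = 2 * t := hs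
    omega
  ext (a | z) (b | z')
  · simp [layerBlock, layerAdj, ← hs, one_apply]
  · simp [layerBlock, layerAdj, ← hs, hpar]
  · simp [layerBlock, layerAdj, ← hs, hpar, junctionOut]
  · simp [layerBlock, layerAdj, ← hs, hpar]

theorem exists_covBy_nLayer_covBy {t t' : Fin n} (h : t ⋖ t') :
    ∃ s, nLayer t ⋖ s ∧ s ⋖ nLayer t' := by
  rw [Fin.covBy_iff, Nat.covBy_iff_add_one_eq] at h
  refine ⟨⟨2 * t + 1, by omega⟩, ?_, ?_⟩ <;>
    simp only [Fin.covBy_iff, Nat.covBy_iff_add_one_eq, nLayer]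
  omega

theorem isMax_nLayer {t : Fin n} (ht : IsMax t) : IsMax (nLayer t) := by
  have hlast : n - 1 ≤ (t : ℕ) := ht.isTop ⟨n - 1, Nat.sub_one_lt_of_lt t.isLt⟩
  intro s _
  change (s : ℕ) ≤ 2 * t
  omega

/-- The number of paths in `C`, the trivial ones included, from each vertex of the layer `nLayer t`
to each vertex of the layer `nLayer u`; the junction indices, unused in `N`-layers, are dropped. -/
def layerWalkCount (n L : ℕ) (K : ℕ → ℕ → ℕ → Bool) (t u : Fin n) : Matrix (Fin n) (Fin n) ℕ :=
  (layerBlock (walkCount (layerAdj n L K) (2 * n - 1)) (nLayer t) (nLayer u)).toBlocks₁₁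

theorem layerWalkCount_of_isMax {t : Fin n} (ht : IsMax t) : layerWalkCount n L K t t = 1 := by
  rw [layerWalkCount,
    isLayered_layerAdj.layerBlock_walkCount_of_isMax layerAdj_pow_eq_zero (isMax_nLayer ht),
    ← fromBlocks_one, toBlocks_fromBlocks₁₁]

theorem layerWalkCount_of_covBy {t t' u : Fin n} (htt' : t ⋖ t') (hu : IsMax u) :
    layerWalkCount n L K t u =
      (1 + single t t 1 * bitCount n L K) * layerWalkCount n L K t' u := by
  obtain ⟨s, hts, hst'⟩ := exists_covBy_nLayer_covBy htt'
  have hne {r r' : Fin (2 * n - 1)} (h : r ⋖ r') : r ≠ nLayer u := by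
    rintro rfl
    exact (isMax_nLayer hu).not_lt h.lt
  rw [layerWalkCount, layerWalkCount,
    isLayered_layerAdj.layerBlock_walkCount layerAdj_pow_eq_zero hts (hne hts),
    isLayered_layerAdj.layerBlock_walkCount layerAdj_pow_eq_zero hst' (hne hst'),
    layerBlock_layerAdj_nLayer hts, layerBlock_layerAdj_of_covBy_nLayer hst', ← Matrix.mul_assoc,
    fromBlocks_multiply, ← junctionIn_mul_junctionOut]
  generalize layerBlock _ _ _ = W
  rw [← fromBlocks_toBlocks W, fromBlocks_multiply]
  simp

theorem walkCount_layerAdj {t q u : Fin n} (htq : t ≤ q) (hu : IsMax u) (j : Fin n) :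
    walkCount (layerAdj n L K) (2 * n - 1) (nLayer t, Sum.inl q) (nLayer u, Sum.inl j) =
      walkCount (bitCount n L K) n q j := by
  have hrow := row_eq_of_covBy_recurrence (U := (layerWalkCount n L K · u))
    (fun _ _ => lt_of_bitCount_ne_zero) (walkCount_eq_mul_add_one bitCount_pow_eq_zero)
    (fun t ht => by
      obtain rfl : t = u := le_antisymm (hu.isTop t) (ht.isTop u)
      exact layerWalkCount_of_isMax hu)
    (fun _ _ h => layerWalkCount_of_covBy h hu) t q
  rw [if_neg htq.not_gt] at hrow
  exact congr_fun hrow j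

end LayerAdj

/-- For every `i`, the number of directed paths in the layered graph `C` from vertex
`i` in layer `N_i` to vertex `n` in layer `N_n` is congruent modulo 2 to the number of
directed paths from vertex `i` to vertex `n` in the monotone DAG `B`. -/
theorem stmt9 (n L : ℕ) (hn : 2 ≤ n) (hL : 1 ≤ L) (K : ℕ → ℕ → ℕ → Bool) (i : Fin n) :
    (∑ k ∈ Finset.Icc 1 (2 * n - 2),
        ((layerAdj n L K) ^ k)
          ((⟨2 * (i : ℕ), by have := i.isLt; omega⟩ : Fin (2 * n - 1)), Sum.inl i)
          ((⟨2 * n - 2, by omega⟩ : Fin (2 * n - 1)),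
            Sum.inl (⟨n - 1, by omega⟩ : Fin n))) ≡
      (∑ k ∈ Finset.Icc 1 (n - 1),
        ((monB n L K) ^ k) i (⟨n - 1, by omega⟩ : Fin n))
      [MOD 2] := by
  let last : Fin n := ⟨n - 1, by omega⟩
  let vertex (t : Fin n) : Fin (2 * n - 1) × (Fin n ⊕ Fin n × Fin L) := (nLayer t, Sum.inl t)
  have hlast : IsMax last := fun j _ => Nat.le_sub_one_of_lt j.isLt
  have hwalk : walkCount (layerAdj n L K) (2 * n - 1) (vertex i) (vertex last) ≡
      walkCount (monB n L K) n i last [MOD 2] := by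
    rw [walkCount_layerAdj le_rfl hlast]
    exact walkCount_modEq bitCount_modEq_monB n i last
  have hvertex : vertex.Injective := fun _ _ h => Sum.inl_injective (congr_arg Prod.snd h)
  have hone : (1 : Matrix (Fin (2 * n - 1) × (Fin n ⊕ Fin n × Fin L)) _ ℕ) (vertex i) (vertex last)
      = (1 : Matrix (Fin n) (Fin n) ℕ) i last :=
    congr_fun₂ (submatrix_one vertex hvertex) i last
  have htarget : vertex last = (⟨2 * n - 2, by omega⟩, Sum.inl last) :=
    Prod.ext (Fin.ext (Nat.mul_sub 2 n 1)) rfl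
  rw [walkCount_apply _ (show 2 * n - 1 = 2 * n - 2 + 1 by omega),
    walkCount_apply _ (show n = n - 1 + 1 by omega), hone, htarget] at hwalk
  exact Nat.ModEq.add_right_cancel' _ hwalk
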